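/- arXiv:1806.07496 — 4 statements merged into one kernel-verified Lean document; each statement's English description precedes it below -/
import Mathlib

section
/- Let q be a prime power, n, k, r, ρ positive integers, and let 𝔹 ⊆ F_q^{n×n} be a nonzero F_q-linear array code of F_q-dimension k that has (r,ρ) cover-locality, with minimum cover distance d = d_C(𝔹). Then (as an inequality of rational numbers) d ≤ n − k/n + 1 − (⌈k/(n·r)⌉ − 1)·(ρ − 1). -/
/-- `X` is a cover of the matrix `E`: every nonzero entry lies in a row line
(`Sum.inl i`) or a column line (`Sum.inr j`) belonging to `X`. -/
def IsCover {F : Type*} [Zero F] {m n : ℕ} (E : Matrix (Fin m) (Fin n) F)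
    (X : Finset (Fin m ⊕ Fin n)) : Prop :=
  ∀ i j, E i j ≠ 0 → Sum.inl i ∈ X ∨ Sum.inr j ∈ X

/-- The cover weight of a matrix: the minimum cardinality of a cover. -/
noncomputable def coverWeight {F : Type*} [Zero F] {m n : ℕ}
    (E : Matrix (Fin m) (Fin n) F) : ℕ :=
  sInf {k | ∃ X : Finset (Fin m ⊕ Fin n), IsCover E X ∧ X.card = k}

/-- The Hamming weight of a vector: its number of nonzero coordinates. -/
noncomputable def hWt {K : Type*} [Zero K] {n : ℕ} (c : Fin n → K) : ℕ :=
  Nat.card {j : Fin n // c j ≠ 0}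

/-- The minimum cover distance of a (linear) array code, as a set of matrices:
the minimum cover weight of a nonzero codeword. -/
noncomputable def minCoverDist {F : Type*} [Zero F] {n : ℕ}
    (S : Set (Matrix (Fin n) (Fin n) F)) : ℕ :=
  sInf {d | ∃ M ∈ S, M ≠ 0 ∧ coverWeight M = d}

/-- The minimum Hamming distance of a (linear) code, as a set of vectors:
the minimum Hamming weight of a nonzero codeword. -/
noncomputable def minHammingDist {K : Type*} [Zero K] {n : ℕ}
    (S : Set (Fin n → K)) : ℕ :=
  sInf {d | ∃ c ∈ S, c ≠ 0 ∧ hWt c = d}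

/-- Restriction of a matrix to a set of rows (other rows are zeroed out). -/
def rowRestrict {F : Type*} [Zero F] {n : ℕ} (Γ : Finset (Fin n))
    (M : Matrix (Fin n) (Fin n) F) : Matrix (Fin n) (Fin n) F :=
  Matrix.of fun i j => if i ∈ Γ then M i j else 0

/-- Restriction of a matrix to a set of columns (other columns are zeroed out). -/
def colRestrict {F : Type*} [Zero F] {n : ℕ} (Γ : Finset (Fin n))
    (M : Matrix (Fin n) (Fin n) F) : Matrix (Fin n) (Fin n) F :=
  Matrix.of fun i j => if j ∈ Γ then M i j else 0

/-- `(r, ρ)` cover-locality: every row (resp. column) line has a recovery set of at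
most `r + ρ - 1` rows (resp. columns) containing it, on which the restricted code
has minimum cover distance at least `ρ`. -/
def CoverLocality {F : Type*} [Field F] {n : ℕ}
    (B : Submodule F (Matrix (Fin n) (Fin n) F)) (r ρ : ℕ) : Prop :=
  (∀ i : Fin n, ∃ Γ : Finset (Fin n), i ∈ Γ ∧ Γ.card ≤ r + ρ - 1 ∧
    ∀ M ∈ B, rowRestrict Γ M ≠ 0 → ρ ≤ coverWeight (rowRestrict Γ M)) ∧
  (∀ j : Fin n, ∃ Γ : Finset (Fin n), j ∈ Γ ∧ Γ.card ≤ r + ρ - 1 ∧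
    ∀ M ∈ B, colRestrict Γ M ≠ 0 → ρ ≤ coverWeight (colRestrict Γ M))

/-!
Only the rows matter. Reading an array as the word of its rows turns `𝔹` into a linear code of
length `n` over the alphabet `F ^ n`, of dimension `n` over `F`; the nonzero rows form a cover, so
the cover weight is at most the Hamming weight, and cover-locality gives locality in the Hamming
metric. What remains is the Singleton-like bound for locally recoverable codes over an alphabet of
dimension `a`. Forcing a codeword to vanish on one more coordinate costs at most `a` dimensions,
but the last `ρ - 1` new coordinates of a recovery set come for free. So
`⌈k / (a * r)⌉ - 1` recovery sets can be absorbed into the zero set while some nonzero codeword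
survives; continuing coordinate by coordinate up to a maximal zero set, the survivor has weight at
most the claimed bound.
-/

open Finset Module

section Shorten

variable {K A ι : Type*} [DivisionRing K] [AddCommGroup A] [Module K A]
  {C : Submodule K (ι → A)} {S T : Finset ι} {x : ι → A}

/-- The subcode of words of `C` vanishing on the coordinates in `S`, that is, the shortening of `C`
at `S`. The zero coordinates are kept, so that all shortenings of `C` live in the same space. -/
def shorten (C : Submodule K (ι → A)) (S : Finset ι) : Submodule K (ι → A) :=
  C ⊓ LinearMap.ker (LinearMap.funLeft K A ((↑) : S → ι))

theorem mem_shorten : x ∈ shorten C S ↔ x ∈ C ∧ ∀ i ∈ S, x i = 0 := by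
  simp [shorten, funext_iff, LinearMap.funLeft_apply]

theorem shorten_empty : shorten C ∅ = C := by
  ext x
  simp [mem_shorten]

theorem shorten_shorten [DecidableEq ι] : shorten (shorten C S) T = shorten C (S ∪ T) := by
  ext x
  simp only [mem_shorten, mem_union, or_imp, forall_and, and_assoc]

theorem exists_apply_ne_zero_of_shorten_ne_bot (h : shorten C S ≠ ⊥) :
    ∃ x ∈ shorten C S, ∃ i ∉ S, x i ≠ 0 := by
  obtain ⟨x, hx, hx0⟩ := Submodule.exists_mem_ne_zero_of_ne_bot h
  obtain ⟨i, hi⟩ := Function.ne_iff.1 hx0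
  exact ⟨x, hx, i, fun hiS => hi ((mem_shorten.1 hx).2 i hiS), hi⟩

theorem hammingNorm_add_card_le_of_mem_shorten [Fintype ι] [DecidableEq A]
    (hx : x ∈ shorten C S) : hammingNorm x + #S ≤ Fintype.card ι := by
  classical
  have hdisj : Disjoint ({i | x i ≠ 0} : Finset ι) S :=
    disjoint_left.2 fun i hi hiS => (mem_filter.1 hi).2 ((mem_shorten.1 hx).2 i hiS)
  rw [hammingNorm, ← card_union_of_disjoint hdisj]
  exact card_le_univ _

variable [Finite ι] [Module.Finite K A]

theorem finrank_le_finrank_shorten_add (C : Submodule K (ι → A)) (S : Finset ι) :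
    finrank K C ≤ finrank K (shorten C S) + finrank K A * #S := by
  let restrict := (LinearMap.funLeft K A ((↑) : S → ι)).domRestrict C
  have hker : finrank K (LinearMap.ker restrict) = finrank K (shorten C S) := by
    rw [LinearMap.ker_domRestrict, shorten, ← Submodule.map_comap_subtype,
      Submodule.finrank_map_subtype_eq]
  have hrange : finrank K (LinearMap.range restrict) ≤ finrank K A * #S :=
    (Submodule.finrank_le _).trans_eq (by simp [finrank_pi_fintype, mul_comm])
  linarith [restrict.finrank_range_add_finrank_ker]

theorem finrank_shorten_add_mul_card_mono (h : S ⊆ T) :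
    finrank K (shorten C S) + finrank K A * #S ≤
      finrank K (shorten C T) + finrank K A * #T := by
  classical
  have hdim := finrank_le_finrank_shorten_add (shorten C S) (T \ S)
  rw [shorten_shorten, union_sdiff_of_subset h] at hdim
  calc finrank K (shorten C S) + finrank K A * #S
      ≤ finrank K (shorten C T) + finrank K A * #(T \ S) + finrank K A * #S := by gcongr
    _ = finrank K (shorten C T) + finrank K A * #T := by
      rw [← card_sdiff_add_card_eq_card h, mul_add, add_assoc]

theorem exists_superset_finrank_shorten_le (h : shorten C S ≠ ⊥) :
    ∃ T, S ⊆ T ∧ shorten C T ≠ ⊥ ∧ finrank K (shorten C T) ≤ finrank K A := by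
  classical
  obtain ⟨T, hST, hT⟩ :=
    (Set.toFinite {T : Finset ι | shorten C T ≠ ⊥}).exists_le_maximal h
  obtain ⟨-, -, i, hiT, -⟩ := exists_apply_ne_zero_of_shorten_ne_bot hT.prop
  have hbot : shorten C (insert i T) = ⊥ := by
    by_contra hne
    exact hiT (hT.le_of_ge hne (subset_insert i T) (mem_insert_self i T))
  refine ⟨T, hST, hT.prop, ?_⟩
  have hdim := finrank_shorten_add_mul_card_mono (C := C) (subset_insert i T)
  rw [hbot, finrank_bot, card_insert_of_notMem hiT] at hdim
  linarith

end Shorten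

section Locality

variable {K A ι : Type*} [DivisionRing K] [AddCommGroup A] [Module K A] [DecidableEq A]
  {C : Submodule K (ι → A)} {r ρ : ℕ} {S T Γ : Finset ι}

/-- `Γ` is a recovery set of `C`: the restriction of `C` to `Γ` has minimum Hamming distance at
least `ρ`, so that any `ρ - 1` erased coordinates in `Γ` are determined by the rest of `Γ`. -/
def IsRecoverySet (C : Submodule K (ι → A)) (ρ : ℕ) (Γ : Finset ι) : Prop :=
  ∀ x ∈ C, ∀ i ∈ Γ, x i ≠ 0 → ρ ≤ #{j ∈ Γ | x j ≠ 0}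

/-- `(r, ρ)`-locality in the Hamming metric: each coordinate lies in a recovery set of size at
most `r + ρ - 1`. -/
def HasLocality (C : Submodule K (ι → A)) (r ρ : ℕ) : Prop :=
  ∀ i, ∃ Γ, i ∈ Γ ∧ #Γ ≤ r + ρ - 1 ∧ IsRecoverySet C ρ Γ

namespace IsRecoverySet

theorem le_card_sdiff [DecidableEq ι] (hΓ : IsRecoverySet C ρ Γ) {x : ι → A}
    (hx : x ∈ shorten C S) {i : ι} (hi : i ∈ Γ) (hxi : x i ≠ 0) : ρ ≤ #(Γ \ S) := by
  obtain ⟨hxC, hxS⟩ := mem_shorten.1 hx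
  refine (hΓ x hxC i hi hxi).trans (card_le_card fun j hj => ?_)
  obtain ⟨hjΓ, hxj⟩ := mem_filter.1 hj
  exact mem_sdiff.2 ⟨hjΓ, fun hjS => hxj (hxS j hjS)⟩

theorem shorten_le_shorten [DecidableEq ι] (hΓ : IsRecoverySet C ρ Γ) (hT : #T < ρ)
    (hST : Γ ⊆ S ∪ T) : shorten C S ≤ shorten C Γ := by
  intro x hx
  obtain ⟨hxC, hxS⟩ := mem_shorten.1 hx
  refine mem_shorten.2 ⟨hxC, fun i hi => ?_⟩
  by_contra hxi
  have hsupp : ({j ∈ Γ | x j ≠ 0} : Finset ι) ⊆ T := fun j hj => by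
    obtain ⟨hjΓ, hxj⟩ := mem_filter.1 hj
    exact (mem_union.1 (hST hjΓ)).resolve_left fun hjS => hxj (hxS j hjS)
  exact ((hΓ x hxC i hi hxi).trans (card_le_card hsupp)).not_gt hT

variable [Finite ι] [Module.Finite K A]

/-- The last `ρ - 1` new coordinates may be left out as erasures, which `Γ` corrects to zero. -/
theorem finrank_shorten_le [DecidableEq ι] (hΓ : IsRecoverySet C ρ Γ) (hρ : 0 < ρ)
    (hcard : ρ - 1 ≤ #(Γ \ S)) :
    finrank K (shorten C S) ≤
      finrank K (shorten C (S ∪ Γ)) + finrank K A * (#(Γ \ S) - (ρ - 1)) := by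
  obtain ⟨T, hT, hTcard⟩ := exists_subset_card_eq hcard
  have hle : shorten C (S ∪ ((Γ \ S) \ T)) ≤ shorten C (S ∪ Γ) := fun x hx => by
    have hxΓ : x ∈ shorten C Γ :=
      hΓ.shorten_le_shorten (T := T) (by omega) (fun i hi => by grind) hx
    grind [mem_shorten]
  have hdim := finrank_le_finrank_shorten_add (shorten C S) ((Γ \ S) \ T)
  rw [shorten_shorten, card_sdiff_of_subset hT, hTcard] at hdim
  exact hdim.trans (by gcongr; exact Submodule.finrank_mono hle)

end IsRecoverySet

namespace HasLocality

variable [Module.Finite K A]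

theorem exists_finrank_shorten_le [Finite ι] (hC : HasLocality C r ρ) (hρ : 0 < ρ)
    (hS : shorten C S ≠ ⊥) :
    ∃ (S' : Finset ι) (b : ℕ), b ≤ r ∧ #S' = #S + b + (ρ - 1) ∧
      finrank K (shorten C S) ≤ finrank K (shorten C S') + finrank K A * b := by
  classical
  obtain ⟨x, hx, i, -, hxi⟩ := exists_apply_ne_zero_of_shorten_ne_bot hS
  obtain ⟨Γ, hiΓ, hΓcard, hΓ⟩ := hC i
  have hnew : ρ ≤ #(Γ \ S) := hΓ.le_card_sdiff hx hiΓ hxi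
  have hnew_le : #(Γ \ S) ≤ #Γ := card_le_card sdiff_subset
  have hunion : #(S ∪ Γ) = #S + #(Γ \ S) := by
    rw [← union_sdiff_self_eq_union, card_union_of_disjoint disjoint_sdiff]
  exact ⟨S ∪ Γ, #(Γ \ S) - (ρ - 1), by omega, by omega, hΓ.finrank_shorten_le hρ (by omega)⟩

theorem exists_finrank_add_mul_le [Finite ι] (hC : HasLocality C r ρ) (hρ : 0 < ρ) (t : ℕ)
    (ht : t * (finrank K A * r) < finrank K C) :
    ∃ S : Finset ι, finrank K C ≤ finrank K (shorten C S) + t * (finrank K A * r) ∧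
      finrank K C + finrank K A * (t * (ρ - 1)) ≤
        finrank K (shorten C S) + finrank K A * #S := by
  induction t with
  | zero => exact ⟨∅, by rw [shorten_empty]; simp⟩
  | succ t ih =>
    rw [Nat.add_one_mul] at ht
    obtain ⟨S, hdim, hexcess⟩ := ih (by omega)
    have hS : shorten C S ≠ ⊥ := Submodule.one_le_finrank_iff.1 (by omega)
    obtain ⟨S', b, hbr, hcard, hstep⟩ := hC.exists_finrank_shorten_le hρ hS
    have hcost : finrank K A * b ≤ finrank K A * r := Nat.mul_le_mul_left _ hbr
    exact ⟨S', by linarith, by rw [hcard]; linarith⟩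

variable [Fintype ι] {d : ℕ}

theorem mul_add_finrank_add_le (hC : HasLocality C r ρ) (hρ : 0 < ρ)
    (hd : ∀ x ∈ C, x ≠ 0 → d ≤ hammingNorm x) {t : ℕ}
    (ht : t * (finrank K A * r) < finrank K C) :
    finrank K A * d + finrank K C + finrank K A * (t * (ρ - 1)) ≤
      finrank K A * (Fintype.card ι + 1) := by
  obtain ⟨S, hdim, hexcess⟩ := hC.exists_finrank_add_mul_le hρ t ht
  have hS : shorten C S ≠ ⊥ := Submodule.one_le_finrank_iff.1 (by omega)
  obtain ⟨T, hST, hT, hTdim⟩ := exists_superset_finrank_shorten_le hS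
  obtain ⟨x, hx, hx0⟩ := Submodule.exists_mem_ne_zero_of_ne_bot hT
  have hdT : d + #T ≤ Fintype.card ι :=
    (Nat.add_le_add_right (hd x (mem_shorten.1 hx).1 hx0) _).trans
      (hammingNorm_add_card_le_of_mem_shorten hx)
  calc finrank K A * d + finrank K C + finrank K A * (t * (ρ - 1))
      ≤ finrank K A * d + (finrank K (shorten C S) + finrank K A * #S) := by linarith
    _ ≤ finrank K A * d + (finrank K (shorten C T) + finrank K A * #T) := by
      gcongr finrank K A * d + ?_
      exact finrank_shorten_add_mul_card_mono hST
    _ ≤ finrank K A * (d + #T + 1) := by linarith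
    _ ≤ finrank K A * (Fintype.card ι + 1) := by gcongr

theorem le_singleton_bound (hC : HasLocality C r ρ) (hr : 0 < r) (hρ : 0 < ρ) (hbot : C ≠ ⊥)
    (hd : ∀ x ∈ C, x ≠ 0 → d ≤ hammingNorm x) :
    (d : ℚ) ≤ Fintype.card ι - (finrank K C : ℚ) / finrank K A + 1 -
      ((⌈(finrank K C : ℚ) / (finrank K A * r)⌉ : ℚ) - 1) * ((ρ : ℚ) - 1) := by
  have hk : 0 < finrank K C := Submodule.one_le_finrank_iff.2 hbot
  have ha : 0 < finrank K A := by
    by_contra! h0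
    have := finrank_zero_iff.1 (Nat.le_zero.1 h0)
    exact hbot (Subsingleton.elim _ _)
  have har : (0 : ℚ) < finrank K A * r := by positivity
  obtain ⟨t, ht⟩ : ∃ t : ℕ, ⌈(finrank K C : ℚ) / (finrank K A * r)⌉ = t + 1 := by
    have hceil : 0 < ⌈(finrank K C : ℚ) / (finrank K A * r)⌉ := Int.ceil_pos.2 (by positivity)
    exact ⟨(⌈(finrank K C : ℚ) / (finrank K A * r)⌉ - 1).toNat, by omega⟩
  have htk : t * (finrank K A * r) < finrank K C := by
    have hlt : ((t : ℤ) : ℚ) < finrank K C / (finrank K A * r) := Int.lt_ceil.1 (by omega)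
    rw [lt_div_iff₀ har] at hlt
    exact_mod_cast hlt
  have hbound : (finrank K A : ℚ) * d + finrank K C + finrank K A * (t * (ρ - 1)) ≤
      finrank K A * (Fintype.card ι + 1) := by
    rw [← Nat.cast_pred hρ]
    exact_mod_cast hC.mul_add_finrank_add_le hρ hd htk
  rw [ht]
  push_cast
  refine le_of_mul_le_mul_left ?_ (Nat.cast_pos.2 ha)
  have hdiv : (finrank K A : ℚ) * (finrank K C / finrank K A) = finrank K C := by field_simp
  linear_combination hbound + hdiv

end HasLocality

end Locality

section Cover

theorem coverWeight_le_hammingNorm {F : Type*} [Zero F] [DecidableEq F] {m n : ℕ}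
    (E : Matrix (Fin m) (Fin n) F) : coverWeight E ≤ hammingNorm (Matrix.of.symm E) := by
  refine Nat.sInf_le
    ⟨({i | Matrix.of.symm E i ≠ 0} : Finset (Fin m)).map .inl, fun i j hij => ?_, card_map _⟩
  exact .inl (mem_map_of_mem _ (mem_filter.2 ⟨mem_univ i, Function.ne_iff.2 ⟨j, hij⟩⟩))

theorem minCoverDist_le_coverWeight {F : Type*} [Zero F] {n : ℕ}
    {S : Set (Matrix (Fin n) (Fin n) F)} {M : Matrix (Fin n) (Fin n) F} (hM : M ∈ S)
    (hM0 : M ≠ 0) : minCoverDist S ≤ coverWeight M :=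
  Nat.sInf_le ⟨M, hM, hM0, rfl⟩

theorem hammingNorm_rowRestrict {F : Type*} [Zero F] [DecidableEq F] {n : ℕ}
    (Γ : Finset (Fin n)) (M : Matrix (Fin n) (Fin n) F) :
    hammingNorm (Matrix.of.symm (rowRestrict Γ M)) = #{i ∈ Γ | Matrix.of.symm M i ≠ 0} := by
  have hrow : ∀ i, Matrix.of.symm (rowRestrict Γ M) i =
      if i ∈ Γ then Matrix.of.symm M i else 0 := fun i => by
    ext j
    by_cases hi : i ∈ Γ <;> simp [rowRestrict, hi]
  rw [hammingNorm]
  congr 1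
  ext i
  by_cases hi : i ∈ Γ <;> simp [hrow, hi]

variable {F : Type*} [DivisionRing F] {n r ρ : ℕ} {B : Submodule F (Matrix (Fin n) (Fin n) F)}

/-- The part of `(r, ρ)` cover-locality that concerns rows, over any division ring. -/
def RowCoverLocality (B : Submodule F (Matrix (Fin n) (Fin n) F)) (r ρ : ℕ) : Prop :=
  ∀ i : Fin n, ∃ Γ : Finset (Fin n), i ∈ Γ ∧ #Γ ≤ r + ρ - 1 ∧
    ∀ M ∈ B, rowRestrict Γ M ≠ 0 → ρ ≤ coverWeight (rowRestrict Γ M)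

/-- The array code `B` as a code of length `n` over the alphabet `Fin n → F`, the letters of a
codeword being the rows of the array. -/
def rowCode (B : Submodule F (Matrix (Fin n) (Fin n) F)) : Submodule F (Fin n → Fin n → F) :=
  B.map (Matrix.ofLinearEquiv F).symm.toLinearMap

theorem mem_rowCode {x : Fin n → Fin n → F} : x ∈ rowCode B ↔ Matrix.of x ∈ B :=
  Submodule.mem_map_equiv _

theorem finrank_rowCode : finrank F (rowCode B) = finrank F B :=
  LinearEquiv.finrank_map_eq _ _

theorem rowCode_ne_bot (hB : B ≠ ⊥) : rowCode B ≠ ⊥ :=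
  Submodule.map_eq_bot_iff.not.2 hB

theorem RowCoverLocality.hasLocality_rowCode [DecidableEq F] (hB : RowCoverLocality B r ρ) :
    HasLocality (rowCode B) r ρ := by
  intro i
  obtain ⟨Γ, hiΓ, hcard, hΓ⟩ := hB i
  refine ⟨Γ, hiΓ, hcard, fun x hx j hj hxj => ?_⟩
  have hnorm : hammingNorm (Matrix.of.symm (rowRestrict Γ (Matrix.of x))) = #{l ∈ Γ | x l ≠ 0} :=
    hammingNorm_rowRestrict Γ _
  have hne : rowRestrict Γ (Matrix.of x) ≠ 0 := by
    refine Matrix.of.symm.injective.ne_iff.1 (hammingNorm_ne_zero_iff.1 ?_)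
    exact hnorm ▸ card_ne_zero_of_mem (mem_filter.2 ⟨hj, hxj⟩)
  calc ρ ≤ coverWeight (rowRestrict Γ (Matrix.of x)) := hΓ _ (mem_rowCode.1 hx) hne
    _ ≤ hammingNorm (Matrix.of.symm (rowRestrict Γ (Matrix.of x))) := coverWeight_le_hammingNorm _
    _ = #{l ∈ Γ | x l ≠ 0} := hnorm

end Cover

theorem cover_locality_singleton_bound_general {F : Type*} [DivisionRing F] {n r ρ : ℕ}
    (hr : 0 < r) (hρ : 0 < ρ) {B : Submodule F (Matrix (Fin n) (Fin n) F)} (hB : B ≠ ⊥)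
    (hloc : RowCoverLocality B r ρ) :
    (minCoverDist (B : Set (Matrix (Fin n) (Fin n) F)) : ℚ) ≤
      (n : ℚ) - (finrank F B : ℚ) / (n : ℚ) + 1 -
        ((⌈(finrank F B : ℚ) / ((n : ℚ) * (r : ℚ))⌉ : ℚ) - 1) * ((ρ : ℚ) - 1) := by
  classical
  have hdist : ∀ x ∈ rowCode B, x ≠ 0 →
      minCoverDist (B : Set (Matrix (Fin n) (Fin n) F)) ≤ hammingNorm x := fun x hx hx0 =>
    (minCoverDist_le_coverWeight (mem_rowCode.1 hx) (Matrix.of.injective.ne hx0)).trans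
      (coverWeight_le_hammingNorm _)
  simpa only [finrank_rowCode, finrank_fin_fun, Fintype.card_fin] using
    hloc.hasLocality_rowCode.le_singleton_bound hr hρ (rowCode_ne_bot hB) hdist

/-- Alphabet-free Singleton-like bound on the cover distance:
for a nonzero linear `[n×n, k, d, r, ρ]_q` cover-metric code with `(r,ρ)` cover-locality,
`d ≤ n - k/n + 1 - (⌈k/(n·r)⌉ - 1)(ρ - 1)` as rational numbers. -/
theorem cover_locality_singleton_bound
    (q n k r ρ : ℕ) (hq : IsPrimePow q) (hn : 0 < n) (hk : 0 < k) (hr : 0 < r)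
    (hρ : 0 < ρ) (F : Type) [Field F] [Fintype F] (hcard : Fintype.card F = q)
    (B : Submodule F (Matrix (Fin n) (Fin n) F)) (hB : B ≠ ⊥)
    (hdim : Module.finrank F B = k)
    (hloc : CoverLocality B r ρ)
    (d : ℕ) (hd : d = minCoverDist (B : Set (Matrix (Fin n) (Fin n) F))) :
    (d : ℚ) ≤ (n : ℚ) - (k : ℚ) / (n : ℚ) + 1 -
      ((⌈(k : ℚ) / ((n : ℚ) * (r : ℚ))⌉ : ℚ) - 1) * ((ρ : ℚ) - 1) := by
  subst hd hdim
  exact cover_locality_singleton_bound_general hr hρ hB hloc.1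
end

section
/- Let q be a prime power, n, r, ρ positive integers, 𝔹 ⊆ F_q^{n×n} an F_q-linear array code with (r,ρ) cover-locality, and φ : F_q^n → F_{q^n} an F_q-linear bijection applied columnwise to give φ_ext : F_q^{n×n} → (F_{q^n})^n. Then the image code φ_ext(𝔹) ⊆ (F_{q^n})^n has (r,ρ) Hamming locality: for every coordinate j ∈ [n] there exists Γ(j) ⊆ [n] with j ∈ Γ(j), |Γ(j)| ≤ r+ρ−1, and every element of φ_ext(𝔹) whose restriction to the coordinates Γ(j) is nonzero has at least ρ nonzero coordinates inside Γ(j). -/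
/-! The nonzero columns of a matrix form a cover. A map `φ` that vanishes exactly at `0` sends them
to the nonzero coordinates of the image vector, so the cover weight of a matrix is at most the
Hamming weight of its image. As `φ_ext` commutes with restriction to a set of columns, the recovery
sets of the column lines are recovery sets for the image code. -/

section CoverWeight

variable {F K : Type*} [Zero F] [Zero K] {m n : ℕ}

/-- The extension `φ_ext` of a map `φ` on column vectors to matrices, which applies `φ` to each
column. -/
def mapColumns (φ : (Fin m → F) → K) (M : Matrix (Fin m) (Fin n) F) : Fin n → K :=
  φ ∘ M.col

theorem coverWeight_le_card_of_columns {E : Matrix (Fin m) (Fin n) F} (S : Finset (Fin n))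
    (hS : ∀ i j, E i j ≠ 0 → j ∈ S) : coverWeight E ≤ S.card :=
  Nat.sInf_le ⟨S.map Function.Embedding.inr,
    fun i j hij => Or.inr (Finset.mem_map_of_mem _ (hS i j hij)), S.card_map _⟩

theorem coverWeight_le_hWt_mapColumns {φ : (Fin m → F) → K} (hφ : ∀ v, φ v = 0 → v = 0)
    (E : Matrix (Fin m) (Fin n) F) : coverWeight E ≤ hWt (mapColumns φ E) := by
  classical
  rw [hWt, Nat.card_eq_fintype_card, Fintype.card_subtype]
  refine coverWeight_le_card_of_columns _ fun i j hij => ?_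
  exact Finset.mem_filter.2 ⟨Finset.mem_univ j, fun hj => hij (congrFun (hφ _ hj) i)⟩

end CoverWeight

section Locality

variable {F K : Type*} [Zero F] [Zero K] {n : ℕ}

/-- The column half of `CoverLocality`, for an arbitrary set of matrices in place of a linear
code. -/
def ColumnCoverLocality (C : Set (Matrix (Fin n) (Fin n) F)) (r ρ : ℕ) : Prop :=
  ∀ j : Fin n, ∃ Γ : Finset (Fin n), j ∈ Γ ∧ Γ.card ≤ r + ρ - 1 ∧
    ∀ M ∈ C, colRestrict Γ M ≠ 0 → ρ ≤ coverWeight (colRestrict Γ M)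

/-- `(r, ρ)` Hamming locality of a set of vectors: every coordinate lies in a recovery set of at
most `r + ρ - 1` coordinates on which every codeword is zero or has weight at least `ρ`. -/
def HammingLocality (C : Set (Fin n → K)) (r ρ : ℕ) : Prop :=
  ∀ j : Fin n, ∃ Γ : Finset (Fin n), j ∈ Γ ∧ Γ.card ≤ r + ρ - 1 ∧
    ∀ c ∈ C, (∃ a ∈ Γ, c a ≠ 0) → ρ ≤ Nat.card {a : Fin n // a ∈ Γ ∧ c a ≠ 0}

theorem hWt_indicator (s : Set (Fin n)) (c : Fin n → K) :
    hWt (s.indicator c) = Nat.card {a : Fin n // a ∈ s ∧ c a ≠ 0} :=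
  Nat.card_congr (Equiv.subtypeEquivRight fun _ => Set.indicator_apply_ne_zero)

theorem col_colRestrict (Γ : Finset (Fin n)) (M : Matrix (Fin n) (Fin n) F) :
    (colRestrict Γ M).col = (Γ : Set (Fin n)).indicator M.col := by
  ext j i
  by_cases hj : j ∈ Γ <;> simp [colRestrict, hj]

theorem mapColumns_colRestrict {φ : (Fin n → F) → K} (hφ : φ 0 = 0) (Γ : Finset (Fin n))
    (M : Matrix (Fin n) (Fin n) F) :
    mapColumns φ (colRestrict Γ M) = (Γ : Set (Fin n)).indicator (mapColumns φ M) := by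
  rw [mapColumns, col_colRestrict, mapColumns, Set.indicator_comp_of_zero hφ]

theorem colRestrict_ne_zero_of_mapColumns_apply_ne_zero {φ : (Fin n → F) → K} (hφ : φ 0 = 0)
    {Γ : Finset (Fin n)} {M : Matrix (Fin n) (Fin n) F} {a : Fin n} (ha : a ∈ Γ)
    (hMa : mapColumns φ M a ≠ 0) : colRestrict Γ M ≠ 0 := by
  intro hM
  apply hMa
  calc
    mapColumns φ M a = mapColumns φ (colRestrict Γ M) a := by
      rw [mapColumns_colRestrict hφ, Set.indicator_of_mem (Finset.mem_coe.2 ha)]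
    _ = φ 0 := by rw [hM]; rfl
    _ = 0 := hφ

theorem image_hamming_locality_of_cover_locality_general {φ : (Fin n → F) → K}
    (hφ : ∀ v, φ v = 0 ↔ v = 0) {C : Set (Matrix (Fin n) (Fin n) F)} {r ρ : ℕ}
    (hC : ColumnCoverLocality C r ρ) : HammingLocality (mapColumns φ '' C) r ρ := by
  have hφ₀ : φ 0 = 0 := (hφ 0).2 rfl
  intro j
  obtain ⟨Γ, hj, hcard, hdist⟩ := hC j
  refine ⟨Γ, hj, hcard, ?_⟩
  rintro _ ⟨M, hM, rfl⟩ ⟨a, ha, hMa⟩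
  calc
    ρ ≤ coverWeight (colRestrict Γ M) :=
      hdist M hM (colRestrict_ne_zero_of_mapColumns_apply_ne_zero hφ₀ ha hMa)
    _ ≤ hWt (mapColumns φ (colRestrict Γ M)) :=
      coverWeight_le_hWt_mapColumns (fun v => (hφ v).1) _
    _ = Nat.card {a : Fin n // a ∈ Γ ∧ mapColumns φ M a ≠ 0} := by
      simp only [mapColumns_colRestrict hφ₀, hWt_indicator, Finset.mem_coe]

end Locality

/-- if `𝔹 ⊆ F_q^{n×n}` has `(r,ρ)` cover-locality, then the image
code `φ_ext(𝔹) ⊆ (F_{q^n})^n` (under a columnwise `F_q`-linear bijection) has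
`(r,ρ)` Hamming locality: every coordinate `j` has a recovery set `Γ(j)` of at most
`r + ρ - 1` coordinates containing `j`, such that every image codeword that is
nonzero on `Γ(j)` has at least `ρ` nonzero coordinates inside `Γ(j)`. -/
theorem image_hamming_locality_of_cover_locality
    (q n r ρ : ℕ) (hq : IsPrimePow q) (hn : 0 < n) (hr : 0 < r) (hρ : 0 < ρ)
    (F : Type) [Field F] [Fintype F] (hcard : Fintype.card F = q)
    (K : Type) [Field K] [Fintype K] [Algebra F K] (hcardK : Fintype.card K = q ^ n)
    (φ : (Fin n → F) ≃ₗ[F] K)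
    (B : Submodule F (Matrix (Fin n) (Fin n) F))
    (hloc : CoverLocality B r ρ) :
    ∀ j : Fin n, ∃ Γ : Finset (Fin n), j ∈ Γ ∧ Γ.card ≤ r + ρ - 1 ∧
      ∀ c ∈ ((fun (M : Matrix (Fin n) (Fin n) F) (j' : Fin n) =>
          φ (fun i => M i j')) '' (B : Set (Matrix (Fin n) (Fin n) F))),
        (∃ a ∈ Γ, c a ≠ 0) → ρ ≤ Nat.card {a : Fin n // a ∈ Γ ∧ c a ≠ 0} :=
  image_hamming_locality_of_cover_locality_general (fun _ => φ.map_eq_zero_iff) hloc.2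
end

section
/- Let q be a prime power, n, r, ρ positive integers, R : [n]×[n] → [n] a Latin square, and 𝒞 ⊆ F_q^n an F_q-linear code with (r,ρ) Hamming locality, i.e., for every coordinate j ∈ [n] there exists Γ(j) ⊆ [n] with j ∈ Γ(j), |Γ(j)| ≤ r+ρ−1, and every codeword of 𝒞 whose restriction to Γ(j) is nonzero has at least ρ nonzero coordinates in Γ(j). Define 𝔹_R = { vd_R(T) : T ∈ 𝒞^n } with vd_R(T)_{R(s,j), j} = c^{(s)}_j. Then 𝔹_R satisfies the column part of (r,ρ) cover-locality: for every column index j, the restriction of 𝔹_R to the columns in Γ(j) has minimum cover distance at least ρ, i.e., every codeword of 𝔹_R whose restriction to the columns Γ(j) is a nonzero matrix has cover weight at least ρ on those columns. -/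
/-!
A nonzero entry in a column of `Γ` is a coordinate of some constituent codeword `c`, which by
locality is nonzero in at least `ρ` positions of `Γ`. The Latin square places these entries in
pairwise distinct rows and columns, so no line covers two of them.
-/

section CoverWeight

variable {α : Type*} [Zero α] {m n : ℕ} {E : Matrix (Fin m) (Fin n) α}

theorem isCover_univ : IsCover E Finset.univ :=
  fun _ _ _ ↦ Or.inl (Finset.mem_univ _)

theorem le_coverWeight {k : ℕ} (h : ∀ X, IsCover E X → k ≤ X.card) : k ≤ coverWeight E := by
  refine le_csInf ⟨_, Finset.univ, isCover_univ, rfl⟩ ?_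
  rintro _ ⟨X, hX, rfl⟩
  exact h X hX

theorem IsCover.natCard_le_card {X : Finset (Fin m ⊕ Fin n)} (hX : IsCover E X) {ι : Type*}
    {f : ι → Fin m} {g : ι → Fin n} (hf : Function.Injective f) (hg : Function.Injective g)
    (hE : ∀ a, E (f a) (g a) ≠ 0) : Nat.card ι ≤ X.card := by
  have exists_line : ∀ a, ∃ l : X, l.1 = Sum.inl (f a) ∨ l.1 = Sum.inr (g a) := fun a ↦
    (hX _ _ (hE a)).elim (fun h ↦ ⟨⟨_, h⟩, Or.inl rfl⟩) (fun h ↦ ⟨⟨_, h⟩, Or.inr rfl⟩)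
  choose line hline using exists_line
  have line_injective : Function.Injective line := by
    intro a b hab
    have hb := hline b
    rw [← hab] at hb
    rcases hline a with ha | ha <;> rcases hb with hb | hb
    · exact hf (Sum.inl_injective (ha.symm.trans hb))
    · exact absurd (ha.symm.trans hb) Sum.inl_ne_inr
    · exact absurd (ha.symm.trans hb) Sum.inr_ne_inl
    · exact hg (Sum.inr_injective (ha.symm.trans hb))
  exact (Nat.card_le_card_of_injective line line_injective).trans_eq (Nat.card_eq_finsetCard X)

end CoverWeight

section ColRestrict

variable {α : Type*} [Zero α] {n : ℕ} {Γ : Finset (Fin n)} {M : Matrix (Fin n) (Fin n) α}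

theorem colRestrict_apply_ne_zero_iff {i j : Fin n} :
    colRestrict Γ M i j ≠ 0 ↔ j ∈ Γ ∧ M i j ≠ 0 :=
  ite_ne_right_iff

theorem colRestrict_ne_zero_iff :
    colRestrict Γ M ≠ 0 ↔ ∃ i, ∃ j ∈ Γ, M i j ≠ 0 := by
  simp only [← colRestrict_apply_ne_zero_iff, ne_eq, ← Matrix.ext_iff, Matrix.zero_apply,
    not_forall]

theorem natCard_ne_zero_le_coverWeight_colRestrict {f : Fin n → Fin n} (hf : Set.InjOn f Γ) :
    Nat.card {a // a ∈ Γ ∧ M (f a) a ≠ 0} ≤ coverWeight (colRestrict Γ M) :=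
  le_coverWeight fun _ hX ↦ hX.natCard_le_card
    (f := fun a : {a // a ∈ Γ ∧ M (f a) a ≠ 0} ↦ f a)
    (fun a b hab ↦ Subtype.ext (hf a.2.1 b.2.1 hab)) Subtype.val_injective
    (fun a ↦ colRestrict_apply_ne_zero_iff.mpr a.2)

end ColRestrict

theorem vd_code_column_cover_locality_general {α ι : Type*} [Zero α] {n ρ : ℕ}
    {R : ι → Fin n → Fin n} {C : Set (Fin n → α)} {Γ : Finset (Fin n)}
    (hinj : ∀ s, Set.InjOn (R s) Γ)
    (hsurj : ∀ b ∈ Γ, Function.Surjective fun s ↦ R s b)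
    (hloc : ∀ c ∈ C, (∃ a ∈ Γ, c a ≠ 0) → ρ ≤ Nat.card {a : Fin n // a ∈ Γ ∧ c a ≠ 0})
    {T : ι → Fin n → α} (hT : ∀ s, T s ∈ C)
    {M : Matrix (Fin n) (Fin n) α} (hM : ∀ s j, M (R s j) j = T s j)
    (hne : colRestrict Γ M ≠ 0) : ρ ≤ coverWeight (colRestrict Γ M) := by
  obtain ⟨i, b, hb, hMib⟩ := colRestrict_ne_zero_iff.mp hne
  obtain ⟨s, rfl⟩ := hsurj b hb i
  calc ρ ≤ Nat.card {a // a ∈ Γ ∧ T s a ≠ 0} := hloc (T s) (hT s) ⟨b, hb, hM s b ▸ hMib⟩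
    _ = Nat.card {a // a ∈ Γ ∧ M (R s a) a ≠ 0} := by simp only [hM]
    _ ≤ coverWeight (colRestrict Γ M) := natCard_ne_zero_le_coverWeight_colRestrict (hinj s)

/-- if the constituent code `𝒞 ⊆ F_q^n` has `(r,ρ)` Hamming
locality with recovery sets `Γ(j)`, then the Latin-square array code
`𝔹_R = { vd_R(T) : T ∈ 𝒞^n }` satisfies the column part of `(r,ρ)` cover-locality:
every codeword whose restriction to the columns `Γ(j)` is nonzero has cover weight
at least `ρ` on those columns. -/
theorem vd_code_column_cover_locality
    (q n r ρ : ℕ) (hq : IsPrimePow q) (hn : 0 < n) (hr : 0 < r) (hρ : 0 < ρ)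
    (F : Type) [Field F] [Fintype F] (hcard : Fintype.card F = q)
    (R : Fin n → Fin n → Fin n)
    (hR1 : ∀ s, Function.Injective (R s))
    (hR2 : ∀ j, Function.Injective (fun s => R s j))
    (C : Submodule F (Fin n → F))
    (Γ : Fin n → Finset (Fin n))
    (hΓmem : ∀ j, j ∈ Γ j)
    (hΓcard : ∀ j, (Γ j).card ≤ r + ρ - 1)
    (hΓloc : ∀ j, ∀ c ∈ C, (∃ a ∈ Γ j, c a ≠ 0) →
      ρ ≤ Nat.card {a : Fin n // a ∈ Γ j ∧ c a ≠ 0}) :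
    ∀ j : Fin n, ∀ T : Fin n → (Fin n → F), (∀ s, T s ∈ C) →
      ∀ M : Matrix (Fin n) (Fin n) F, (∀ s j', M (R s j') j' = T s j') →
        colRestrict (Γ j) M ≠ 0 → ρ ≤ coverWeight (colRestrict (Γ j) M) :=
  fun j _ hT _ hM hne ↦ vd_code_column_cover_locality_general (fun s ↦ (hR1 s).injOn)
    (fun b _ ↦ Finite.surjective_of_injective (hR2 b)) (hΓloc j) hT hM hne
end

section
/- Let q be a prime power, n, k', r, ρ positive integers, R : [n]×[n] → [n] a Latin square, and 𝒞 ⊆ F_q^n a nonzero F_q-linear code of dimension k' whose minimum Hamming distance attains the Singleton-like locality bound with equality: d_H(𝒞) = n − k' + 1 − (⌈k'/r⌉ − 1)(ρ − 1). Define 𝔹_R = { vd_R(T) : T ∈ 𝒞^n } with vd_R(T)_{R(s,j), j} = c^{(s)}_j, an F_q-linear array code of dimension k = n·k'. Then the minimum cover distance of 𝔹_R attains the cover-metric bound with equality: d_C(𝔹_R) = n − k/n + 1 − (⌈k/(n·r)⌉ − 1)(ρ − 1). -/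
/-!
The entries of `vd_R(T)` read along the transversal `j ↦ (R s j, j)` form the codeword `T s`.
A line meets a transversal at most once, so a cover needs at least one line per nonzero entry of
that codeword, and some transversal of a nonzero array is nonzero: `d_C ≥ d_H`. Conversely, the
array with all rows equal to a codeword `c` has every transversal equal to `c` and is covered by the
columns in the support of `c`: `d_C ≤ d_H`. The two distances being equal, the cover-metric bound is
the locality bound with `k / n = k'`.
-/

open Finset Function

section CoverWeight

variable {F : Type*} [Zero F] {m n : ℕ} {E : Matrix (Fin m) (Fin n) F}
  {X : Finset (Fin m ⊕ Fin n)}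

theorem isCover_univ_s11 (E : Matrix (Fin m) (Fin n) F) : IsCover E univ :=
  fun _ _ _ => .inl (mem_univ _)

theorem IsCover.coverWeight_le_card (hX : IsCover E X) : coverWeight E ≤ #X :=
  Nat.sInf_le ⟨X, hX, rfl⟩

theorem exists_isCover_card_eq_coverWeight (E : Matrix (Fin m) (Fin n) F) :
    ∃ X, IsCover E X ∧ #X = coverWeight E :=
  Nat.sInf_mem (s := {k | ∃ X, IsCover E X ∧ #X = k}) ⟨_, univ, isCover_univ_s11 E, rfl⟩

open scoped Classical in
theorem hWt_eq_card_filter (c : Fin n → F) : hWt c = #{j | c j ≠ 0} := by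
  rw [hWt, Nat.card_eq_fintype_card, Fintype.card_subtype]

theorem IsCover.hWt_transversal_le_card (hX : IsCover E X) {σ : Fin n → Fin m}
    (hσ : Injective σ) : hWt (fun j => E (σ j) j) ≤ #X := by
  classical
  let line (j : Fin n) : Fin m ⊕ Fin n := if .inr j ∈ X then .inr j else .inl (σ j)
  have line_mem : ∀ j, E (σ j) j ≠ 0 → line j ∈ X := by
    intro j hj
    by_cases hjX : .inr j ∈ X
    · simpa only [line, if_pos hjX] using hjX
    · simpa only [line, if_neg hjX] using (hX _ _ hj).resolve_right hjX
  have line_injective : Injective line := by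
    intro a b hab
    by_cases ha : .inr a ∈ X <;> by_cases hb : .inr b ∈ X <;>
      simp only [line, ha, hb, if_true, if_false, reduceCtorEq, Sum.inl.injEq,
        Sum.inr.injEq] at hab
    · exact hab
    · exact hσ hab
  rw [hWt_eq_card_filter]
  exact card_le_card_of_injOn line (fun j hj => line_mem j (by simpa using hj))
    line_injective.injOn

theorem hWt_transversal_le_coverWeight (E : Matrix (Fin m) (Fin n) F) {σ : Fin n → Fin m}
    (hσ : Injective σ) : hWt (fun j => E (σ j) j) ≤ coverWeight E := by
  obtain ⟨X, hX, hcard⟩ := exists_isCover_card_eq_coverWeight E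
  exact hcard ▸ hX.hWt_transversal_le_card hσ

theorem coverWeight_replicateRow_le_hWt (c : Fin n → F) :
    coverWeight (Matrix.replicateRow (Fin m) c) ≤ hWt c := by
  classical
  have hcover : IsCover (Matrix.replicateRow (Fin m) c)
      (({j | c j ≠ 0} : Finset (Fin n)).map .inr) :=
    fun _ j hj => .inr (mem_map_of_mem .inr (mem_filter.2 ⟨mem_univ j, hj⟩))
  calc
    coverWeight (Matrix.replicateRow (Fin m) c) ≤ _ := hcover.coverWeight_le_card
    _ = hWt c := by rw [card_map, hWt_eq_card_filter]

end CoverWeight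

/-- The array code `{vd_R(T) : T ∈ 𝒞^σ}`, with `T s` written along the cells `(R s j, j)`. It is
encoded as a relation, so it makes sense for any `R`; each `T` has exactly one array `vd_R(T)` when
every map `s ↦ R s j` is bijective, as for a Latin square. -/
def vdCode {F σ : Type*} {m n : ℕ} (R : σ → Fin n → Fin m) (C : Set (Fin n → F)) :
    Set (Matrix (Fin m) (Fin n) F) :=
  {M | ∃ T : σ → (Fin n → F), (∀ s, T s ∈ C) ∧ ∀ s j, M (R s j) j = T s j}

section VdCode

variable {F σ : Type*} {m n : ℕ} {R : σ → Fin n → Fin m} {C : Set (Fin n → F)}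

theorem mem_vdCode_iff {M : Matrix (Fin m) (Fin n) F} :
    M ∈ vdCode R C ↔ ∀ s, (fun j => M (R s j) j) ∈ C := by
  constructor
  · rintro ⟨T, hT, hM⟩ s
    simpa only [hM] using hT s
  · exact fun h => ⟨fun s j => M (R s j) j, h, fun _ _ => rfl⟩

theorem replicateRow_mem_vdCode {c : Fin n → F} (hc : c ∈ C) :
    Matrix.replicateRow (Fin m) c ∈ vdCode R C :=
  mem_vdCode_iff.2 fun _ => hc

variable [Zero F]

theorem exists_transversal_ne_zero (hR : ∀ j, Surjective fun s => R s j)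
    {M : Matrix (Fin m) (Fin n) F} (hM : M ≠ 0) : ∃ s, (fun j => M (R s j) j) ≠ 0 := by
  contrapose! hM
  ext i j
  obtain ⟨s, rfl⟩ := hR j i
  exact congrFun (hM s) j

theorem exists_mem_hWt_le_coverWeight (hrow : ∀ s, Injective (R s))
    (hcol : ∀ j, Surjective fun s => R s j) {M : Matrix (Fin m) (Fin n) F}
    (hM : M ∈ vdCode R C) (hM0 : M ≠ 0) : ∃ c ∈ C, c ≠ 0 ∧ hWt c ≤ coverWeight M := by
  obtain ⟨s, hs⟩ := exists_transversal_ne_zero hcol hM0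
  exact ⟨_, mem_vdCode_iff.1 hM s, hs, hWt_transversal_le_coverWeight M (hrow s)⟩

end VdCode

theorem minCoverDist_vdCode {F σ : Type*} [Zero F] {n : ℕ} {R : σ → Fin n → Fin n}
    (hrow : ∀ s, Injective (R s)) (hcol : ∀ j, Surjective fun s => R s j)
    (C : Set (Fin n → F)) : minCoverDist (vdCode R C) = minHammingDist C := by
  apply csInf_eq_csInf_of_forall_exists_le
  · rintro _ ⟨M, hM, hM0, rfl⟩
    obtain ⟨c, hc, hc0, hle⟩ := exists_mem_hWt_le_coverWeight hrow hcol hM hM0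
    exact ⟨hWt c, ⟨c, hc, hc0, rfl⟩, hle⟩
  · rintro _ ⟨c, hc, hc0, rfl⟩
    obtain ⟨j, -⟩ := ne_iff.1 hc0
    have : Nonempty (Fin n) := ⟨j⟩
    exact ⟨_, ⟨_, replicateRow_mem_vdCode hc, (Matrix.replicateRow_eq_zero c).not.2 hc0, rfl⟩,
      coverWeight_replicateRow_le_hWt c⟩

theorem vd_code_optimal_general {F : Type*} [DivisionRing F] {n r ρ k : ℕ} (hn : 0 < n)
    (_hr : 0 < r) {R : Fin n → Fin n → Fin n} (hR1 : ∀ s, Injective (R s))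
    (hR2 : ∀ j, Injective fun s => R s j) (C : Submodule F (Fin n → F))
    (hopt : (minHammingDist (C : Set (Fin n → F)) : ℚ) =
      n - Module.finrank F C + 1 - (⌈(Module.finrank F C : ℚ) / r⌉ - 1) * (ρ - 1))
    (hk : k = n * Module.finrank F C) :
    (minCoverDist (vdCode R (C : Set (Fin n → F))) : ℚ) =
      n - k / n + 1 - (⌈(k : ℚ) / (n * r)⌉ - 1) * (ρ - 1) := by
  have hdiv : (k : ℚ) / n = Module.finrank F C := by
    rw [hk, Nat.cast_mul, mul_div_cancel_left₀ _ (Nat.cast_ne_zero.2 hn.ne')]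
  rw [minCoverDist_vdCode hR1 fun j => Finite.surjective_of_injective (hR2 j), hopt, ← div_div,
    hdiv]

/-- if the constituent code `𝒞` of dimension `k'` attains the
Singleton-like locality bound `d_H(𝒞) = n - k' + 1 - (⌈k'/r⌉ - 1)(ρ - 1)` with
equality, then the Latin-square array code `𝔹_R = { vd_R(T) : T ∈ 𝒞^n }`, of
dimension `k = n·k'`, attains the cover-metric bound with equality:
`d_C(𝔹_R) = n - k/n + 1 - (⌈k/(n·r)⌉ - 1)(ρ - 1)`. -/
theorem vd_code_optimal
    (q n k' r ρ : ℕ) (hq : IsPrimePow q) (hn : 0 < n) (hk' : 0 < k')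
    (hr : 0 < r) (hρ : 0 < ρ)
    (F : Type) [Field F] [Fintype F] (hcard : Fintype.card F = q)
    (R : Fin n → Fin n → Fin n)
    (hR1 : ∀ s, Function.Injective (R s))
    (hR2 : ∀ j, Function.Injective (fun s => R s j))
    (C : Submodule F (Fin n → F)) (hC : C ≠ ⊥)
    (hdim : Module.finrank F C = k')
    (hopt : (minHammingDist (C : Set (Fin n → F)) : ℚ) =
      (n : ℚ) - (k' : ℚ) + 1 - ((⌈(k' : ℚ) / (r : ℚ)⌉ : ℚ) - 1) * ((ρ : ℚ) - 1))
    (k : ℕ) (hk : k = n * k') :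
    (minCoverDist {M : Matrix (Fin n) (Fin n) F |
        ∃ T : Fin n → (Fin n → F), (∀ s, T s ∈ C) ∧ ∀ s j, M (R s j) j = T s j} : ℚ) =
      (n : ℚ) - (k : ℚ) / (n : ℚ) + 1 -
        ((⌈(k : ℚ) / ((n : ℚ) * (r : ℚ))⌉ : ℚ) - 1) * ((ρ : ℚ) - 1) := by
  subst hdim
  exact vd_code_optimal_general hn hr hR1 hR2 C hopt hk
end
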